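/- arXiv:math/0505216 — 3 statements merged into one kernel-verified Lean document; each statement's English description precedes it below -/
import Mathlib

section
/- Let θ ∈ (0, 1/2) and 0 < δ < θ. If x₁, …, x_k ∈ [0,1] satisfy |x_i − θ| ≥ δ for every i, and α₁, …, α_k ≥ 0 satisfy Σ_i α_i = 1 and Σ_i α_i x_i = θ, then Σ_i α_i (√(x_i) + √(1−x_i))² ≤ (√θ + √(1−θ))² − 2δ². -/
open Real

/-!
With `q = x * (1 - x)`, expanding the square gives
`(√x + √(1 - x)) ^ 2 + 2 * x ^ 2 = 1 + 2 * x + 2 * (√q - q)`.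
Here `q` is a concave function of `x` with values in `[0, 1 / 4]`, where `√q - q` is concave and
increasing, so the whole expression is concave in `x`: the function `(√x + √(1 - x)) ^ 2` is
`4`-strongly concave. Jensen's inequality for a strongly concave function gains half the modulus
times the variance, and a distribution whose points all lie at distance at least `δ` from its mean
has variance at least `δ ^ 2`.
-/

section StrongJensen

variable {ι E : Type*} [NormedAddCommGroup E] [InnerProductSpace ℝ E]
  {t : Finset ι} {w : ι → ℝ} {p : ι → E}

lemma sum_mul_norm_sub_sum_smul_sq (hw : ∑ i ∈ t, w i = 1) :
    ∑ i ∈ t, w i * ‖p i - ∑ j ∈ t, w j • p j‖ ^ 2 =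
      ∑ i ∈ t, w i * ‖p i‖ ^ 2 - ‖∑ i ∈ t, w i • p i‖ ^ 2 := by
  set c := ∑ i ∈ t, w i • p i with hc
  have inner_mean : ∑ i ∈ t, w i * inner ℝ (p i) c = ‖c‖ ^ 2 := by
    simp_rw [← real_inner_smul_left]
    rw [← sum_inner, ← hc, real_inner_self_eq_norm_sq]
  calc ∑ i ∈ t, w i * ‖p i - c‖ ^ 2
      = ∑ i ∈ t, (w i * ‖p i‖ ^ 2 - 2 * (w i * inner ℝ (p i) c) + w i * ‖c‖ ^ 2) :=
        Finset.sum_congr rfl fun i _ ↦ by rw [norm_sub_sq_real]; ring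
    _ = ∑ i ∈ t, w i * ‖p i‖ ^ 2 - 2 * ‖c‖ ^ 2 + 1 * ‖c‖ ^ 2 := by
        rw [Finset.sum_add_distrib, Finset.sum_sub_distrib, ← Finset.mul_sum, ← Finset.sum_mul,
          inner_mean, hw]
    _ = ∑ i ∈ t, w i * ‖p i‖ ^ 2 - ‖c‖ ^ 2 := by ring

lemma sum_mul_le_map_sum_sub_of_strongConcaveOn {s : Set E} {m : ℝ} {f : E → ℝ}
    (hf : StrongConcaveOn s m f) (hw₀ : ∀ i ∈ t, 0 ≤ w i) (hw₁ : ∑ i ∈ t, w i = 1)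
    (hp : ∀ i ∈ t, p i ∈ s) :
    ∑ i ∈ t, w i * f (p i) ≤
      f (∑ i ∈ t, w i • p i) - m / 2 * ∑ i ∈ t, w i * ‖p i - ∑ j ∈ t, w j • p j‖ ^ 2 := by
  have jensen := (strongConcaveOn_iff_convex.1 hf).le_map_sum hw₀ hw₁ hp
  simp only [smul_eq_mul, mul_add, Finset.sum_add_distrib, mul_left_comm _ (m / 2),
    ← Finset.mul_sum] at jensen
  rw [sum_mul_norm_sub_sum_smul_sq hw₁]
  linarith

end StrongJensen

lemma concaveOn_sqrt_sub_self : ConcaveOn ℝ (Set.Ici 0) fun q : ℝ ↦ √q - q :=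
  strictConcaveOn_sqrt.concaveOn.sub (convexOn_id (convex_Ici 0))

lemma monotoneOn_sqrt_sub_self : MonotoneOn (fun q : ℝ ↦ √q - q) (Set.Icc 0 (1 / 4)) := by
  rintro a ⟨ha₀, ha⟩ b ⟨hb₀, hb⟩ hab
  have sqrt_le_half {q : ℝ} (hq : q ≤ 1 / 4) : √q ≤ 1 / 2 :=
    sqrt_le_iff.2 ⟨by norm_num, by linarith⟩
  refine sub_nonneg.1 ?_
  calc 0 ≤ (√b - √a) * (1 - √a - √b) :=
        mul_nonneg (sub_nonneg.2 (sqrt_le_sqrt hab))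
          (by linarith [sqrt_le_half ha, sqrt_le_half hb])
    _ = (√b - b) - (√a - a) := by linear_combination sq_sqrt ha₀ - sq_sqrt hb₀

lemma concaveOn_mul_one_sub : ConcaveOn ℝ Set.univ fun x : ℝ ↦ x * (1 - x) :=
  ((concaveOn_id convex_univ).sub even_two.convexOn_pow).congr fun x _ ↦ by
    simp only [Pi.sub_apply, id_eq]
    ring

lemma image_mul_one_sub_Icc :
    (fun x : ℝ ↦ x * (1 - x)) '' Set.Icc 0 1 = Set.Icc 0 (1 / 4) := by
  refine subset_antisymm ?_ fun q hq ↦ ?_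
  · rintro _ ⟨x, hx, rfl⟩
    exact ⟨mul_nonneg hx.1 (sub_nonneg.2 hx.2), by linarith [sq_nonneg (x - 1 / 2)]⟩
  · have hcont : ContinuousOn (fun x : ℝ ↦ x * (1 - x)) (Set.Icc 0 (1 / 2)) := by fun_prop
    have hq_mem : q ∈ Set.Icc ((0 : ℝ) * (1 - 0)) (1 / 2 * (1 - 1 / 2)) :=
      ⟨by linarith [hq.1], by linarith [hq.2]⟩
    obtain ⟨x, hx, hxq⟩ := intermediate_value_Icc (by norm_num) hcont hq_mem
    exact ⟨x, ⟨hx.1, hx.2.trans (by norm_num)⟩, hxq⟩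

lemma sq_sqrt_add_sqrt_one_sub {x : ℝ} (hx : x ∈ Set.Icc (0 : ℝ) 1) :
    (√x + √(1 - x)) ^ 2 = 1 + 2 * √(x * (1 - x)) := by
  rw [sqrt_mul hx.1, add_sq, sq_sqrt hx.1, sq_sqrt (sub_nonneg.2 hx.2)]
  ring

lemma strongConcaveOn_sq_sqrt_add_sqrt_one_sub :
    StrongConcaveOn (Set.Icc (0 : ℝ) 1) 4 fun x ↦ (√x + √(1 - x)) ^ 2 := by
  have convex_unit : Convex ℝ (Set.Icc (0 : ℝ) 1) := convex_Icc 0 1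
  have concave_comp : ConcaveOn ℝ (Set.Icc 0 1) ((fun q : ℝ ↦ √q - q) ∘ fun x ↦ x * (1 - x)) := by
    refine ConcaveOn.comp ?_ (concaveOn_mul_one_sub.subset (Set.subset_univ _) convex_unit) ?_ <;>
      rw [image_mul_one_sub_Icc]
    · exact concaveOn_sqrt_sub_self.subset Set.Icc_subset_Ici_self (convex_Icc 0 (1 / 4))
    · exact monotoneOn_sqrt_sub_self
  have concave_affine : ConcaveOn ℝ (Set.Icc (0 : ℝ) 1) fun x ↦ 1 + 2 * x :=
    (concaveOn_const 1 convex_unit).add ((concaveOn_id convex_unit).smul zero_le_two)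
  have concave_sum := concave_affine.add (concave_comp.smul zero_le_two)
  refine strongConcaveOn_iff_convex.2 (concave_sum.congr fun x hx ↦ ?_)
  simp only [Pi.add_apply, Function.comp_apply, smul_eq_mul, sq_sqrt_add_sqrt_one_sub hx,
    norm_eq_abs, sq_abs]
  ring

theorem stmt5_general {ι : Type*} {s : Finset ι} {α x : ι → ℝ} {θ δ : ℝ} (hδ : 0 ≤ δ)
    (hx : ∀ i ∈ s, x i ∈ Set.Icc (0 : ℝ) 1) (hfar : ∀ i ∈ s, δ ≤ |x i - θ|)
    (hα : ∀ i ∈ s, 0 ≤ α i) (hsum : ∑ i ∈ s, α i = 1) (hmean : ∑ i ∈ s, α i * x i = θ) :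
    ∑ i ∈ s, α i * (√(x i) + √(1 - x i)) ^ 2 ≤ (√θ + √(1 - θ)) ^ 2 - 2 * δ ^ 2 := by
  have jensen := sum_mul_le_map_sum_sub_of_strongConcaveOn
    strongConcaveOn_sq_sqrt_add_sqrt_one_sub hα hsum hx
  simp only [smul_eq_mul, hmean, norm_eq_abs] at jensen
  have variance_ge : δ ^ 2 ≤ ∑ i ∈ s, α i * |x i - θ| ^ 2 :=
    calc δ ^ 2 = ∑ i ∈ s, α i * δ ^ 2 := by rw [← Finset.sum_mul, hsum, one_mul]
      _ ≤ ∑ i ∈ s, α i * |x i - θ| ^ 2 := Finset.sum_le_sum fun i hi ↦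
        mul_le_mul_of_nonneg_left (pow_le_pow_left₀ hδ (hfar i hi) 2) (hα i hi)
  linarith

theorem stmt5 (θ δ : ℝ) (hθ : θ ∈ Set.Ioo (0 : ℝ) (1 / 2)) (hδ0 : 0 < δ) (hδθ : δ < θ)
    (k : ℕ) (x α : Fin k → ℝ)
    (hx : ∀ i, x i ∈ Set.Icc (0 : ℝ) 1) (hfar : ∀ i, δ ≤ |x i - θ|)
    (hα : ∀ i, 0 ≤ α i) (hsum : ∑ i, α i = 1) (hmean : ∑ i, α i * x i = θ) :
    ∑ i, α i * (Real.sqrt (x i) + Real.sqrt (1 - x i)) ^ 2 ≤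
      (Real.sqrt θ + Real.sqrt (1 - θ)) ^ 2 - 2 * δ ^ 2 :=
  stmt5_general hδ0.le (fun i _ ↦ hx i) (fun i _ ↦ hfar i) (fun i _ ↦ hα i) hsum hmean
end

section
/- Let 0 ≤ ρ < λ ≤ 1, let g(r) = (1−r)²/4, and let U₀(x) = ρx for x ≥ 0 and U₀(x) = λx for x < 0. Then for every t > 0 and every x ∈ ℝ, the Hopf–Lax value U_t(x) = sup_{y ∈ ℝ} { U₀(y) − t·g((x−y)/t) } is given explicitly by: U_t(x) = λx − tλ(1−λ) if x ≤ (1−2λ)t; U_t(x) = −(t−x)²/(4t) if (1−2λ)t ≤ x ≤ (1−2ρ)t; and U_t(x) = ρx − tρ(1−ρ) if x ≥ (1−2ρ)t. In particular the supremum is finite and, on the middle interval, the spatial derivative of U_t equals the rarefaction-fan profile (t−x)/(2t). -/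
/-!
Suppose a line of slope `a` supports `U₀` from above at `y₀` and a line of slope `-a` supports `g`
from below at `r`. Then, for `x = y₀ + t * r`, the first-order terms cancel in the resulting upper
bound on `U₀ y - t * g ((x - y) / t)`, so `y₀` is a maximiser: the Hopf–Lax value is carried by the
characteristic of speed `r` through `y₀`. For `g r = (1 - r) ^ 2 / 4` the speed belonging to `a` is
`r = 1 - 2 * a`. The Riemann datum is the concave function `min (ρ * y) (lam * y)`; its supporting
line has slope `lam` on the left, slope `ρ` on the right, and any slope in `[ρ, lam]` at the kink
`y₀ = 0`. The characteristics leaving the kink fill the rarefaction fan, where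
`a = (t - x) / (2 * t)`.
-/

open Real

/-- The Legendre conjugate `g(r) = (1−r)²/4` of the TASEP flux `G(u) = u(1−u)`. -/
noncomputable def legendreG (r : ℝ) : ℝ := (1 - r) ^ 2 / 4

/-- Antiderivative of the decreasing Riemann datum: `U₀(x) = ρx` for `x ≥ 0`, `λx` for `x < 0`. -/
noncomputable def riemannU0 (lam ρ x : ℝ) : ℝ := if 0 ≤ x then ρ * x else lam * x

/-- The values, over all starting points `y`, whose supremum is the Hopf–Lax formula at `(t, x)` for
the datum `U₀`, with `g` in the role of the Legendre conjugate of the flux. It is kept as a set so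
that suprema can be stated with `IsLUB`, free of the junk value of `sSup`. -/
def hopfLaxValues (g U₀ : ℝ → ℝ) (t x : ℝ) : Set ℝ :=
  {z | ∃ y, z = U₀ y - t * g ((x - y) / t)}

theorem isGreatest_hopfLaxValues_of_supporting_lines {g U₀ : ℝ → ℝ} {a r t y₀ : ℝ} (ht : 0 < t)
    (hU₀ : ∀ y, U₀ y ≤ U₀ y₀ + a * (y - y₀)) (hg : ∀ s, g r - a * (s - r) ≤ g s) :
    IsGreatest (hopfLaxValues g U₀ t (y₀ + t * r)) (U₀ y₀ - t * g r) := by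
  refine ⟨⟨y₀, by rw [add_sub_cancel_left, mul_div_cancel_left₀ r ht.ne']⟩, ?_⟩
  rintro _ ⟨y, rfl⟩
  set s := (y₀ + t * r - y) / t with hs
  have hy : y - y₀ = t * (r - s) := by
    rw [hs]
    field_simp
    ring
  calc U₀ y - t * g s
      ≤ (U₀ y₀ + a * (y - y₀)) - t * (g r - a * (s - r)) :=
        sub_le_sub (hU₀ y) (mul_le_mul_of_nonneg_left (hg s) ht.le)
    _ = U₀ y₀ - t * g r := by
        rw [hy]
        ring

theorem legendreG_one_sub_two_mul (a : ℝ) : legendreG (1 - 2 * a) = a ^ 2 := by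
  unfold legendreG
  ring

theorem legendreG_sub_mul_le (a s : ℝ) :
    legendreG (1 - 2 * a) - a * (s - (1 - 2 * a)) ≤ legendreG s := by
  have hgap : legendreG s - (legendreG (1 - 2 * a) - a * (s - (1 - 2 * a))) =
      ((1 - s) / 2 - a) ^ 2 := by
    unfold legendreG
    ring
  exact sub_nonneg.mp (hgap ▸ sq_nonneg _)

theorem hasDerivAt_neg_sq_sub_div (t x : ℝ) :
    HasDerivAt (fun x' => -(t - x') ^ 2 / (4 * t)) ((t - x) / (2 * t)) x := by
  have hderiv := (((hasDerivAt_id' x).const_sub t).fun_pow 2).fun_neg.div_const (4 * t)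
  have hslope : -((2 : ℕ) * (t - x) ^ (2 - 1) * -1) / (4 * t) = (t - x) / (2 * t) := by
    push_cast
    ring
  exact hslope ▸ hderiv

section RiemannDatum

variable {lam ρ a t x y : ℝ}

theorem riemannU0_of_nonneg (hy : 0 ≤ y) : riemannU0 lam ρ y = ρ * y :=
  if_pos hy

theorem riemannU0_of_nonpos (hy : y ≤ 0) : riemannU0 lam ρ y = lam * y := by
  rcases hy.lt_or_eq with hneg | rfl
  · exact if_neg hneg.not_ge
  · simp [riemannU0]

theorem riemannU0_le_mul (hρa : ρ ≤ a) (halam : a ≤ lam) (y : ℝ) : riemannU0 lam ρ y ≤ a * y := by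
  rcases le_total 0 y with hy | hy
  · rw [riemannU0_of_nonneg hy]
    exact mul_le_mul_of_nonneg_right hρa hy
  · rw [riemannU0_of_nonpos hy]
    exact mul_le_mul_of_nonpos_right halam hy

theorem isLUB_hopfLaxValues_riemannU0 (ht : 0 < t) (hρa : ρ ≤ a) (halam : a ≤ lam)
    (hfoot : riemannU0 lam ρ (x - t * (1 - 2 * a)) = a * (x - t * (1 - 2 * a))) :
    IsLUB (hopfLaxValues legendreG (riemannU0 lam ρ) t x) (a * x - t * a * (1 - a)) := by
  have hsupport (y : ℝ) : riemannU0 lam ρ y ≤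
      riemannU0 lam ρ (x - t * (1 - 2 * a)) + a * (y - (x - t * (1 - 2 * a))) := by
    rw [hfoot, ← mul_add, add_sub_cancel]
    exact riemannU0_le_mul hρa halam y
  have hmax := isGreatest_hopfLaxValues_of_supporting_lines ht hsupport (legendreG_sub_mul_le a)
  rw [sub_add_cancel, hfoot, legendreG_one_sub_two_mul] at hmax
  have hvalue : a * (x - t * (1 - 2 * a)) - t * a ^ 2 = a * x - t * a * (1 - a) := by ring
  exact hvalue ▸ hmax.isLUB

theorem isLUB_hopfLaxValues_riemannU0_left (hρlam : ρ ≤ lam) (ht : 0 < t)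
    (hx : x ≤ (1 - 2 * lam) * t) :
    IsLUB (hopfLaxValues legendreG (riemannU0 lam ρ) t x) (lam * x - t * lam * (1 - lam)) :=
  isLUB_hopfLaxValues_riemannU0 ht hρlam le_rfl (riemannU0_of_nonpos (by linarith))

theorem isLUB_hopfLaxValues_riemannU0_right (hρlam : ρ ≤ lam) (ht : 0 < t)
    (hx : (1 - 2 * ρ) * t ≤ x) :
    IsLUB (hopfLaxValues legendreG (riemannU0 lam ρ) t x) (ρ * x - t * ρ * (1 - ρ)) :=
  isLUB_hopfLaxValues_riemannU0 ht le_rfl hρlam (riemannU0_of_nonneg (by linarith))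

theorem isLUB_hopfLaxValues_riemannU0_fan (ht : 0 < t) (hlx : (1 - 2 * lam) * t ≤ x)
    (hxr : x ≤ (1 - 2 * ρ) * t) :
    IsLUB (hopfLaxValues legendreG (riemannU0 lam ρ) t x) (-(t - x) ^ 2 / (4 * t)) := by
  set a := (t - x) / (2 * t) with ha
  have hρa : ρ ≤ a := by
    rw [ha, le_div_iff₀ (by positivity)]
    linarith
  have halam : a ≤ lam := by
    rw [ha, div_le_iff₀ (by positivity)]
    linarith
  have hfoot : x - t * (1 - 2 * a) = 0 := by
    rw [ha]
    field_simp
    ring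
  have hvalue : -(t - x) ^ 2 / (4 * t) = a * x - t * a * (1 - a) := by
    rw [ha]
    field_simp
    ring
  rw [hvalue]
  apply isLUB_hopfLaxValues_riemannU0 ht hρa halam
  rw [hfoot, riemannU0_of_nonneg le_rfl, mul_zero, mul_zero]

theorem hasDerivAt_sSup_hopfLaxValues_riemannU0_fan (ht : 0 < t)
    (hx : x ∈ Set.Ioo ((1 - 2 * lam) * t) ((1 - 2 * ρ) * t)) :
    HasDerivAt (fun x' => sSup (hopfLaxValues legendreG (riemannU0 lam ρ) t x'))
      ((t - x) / (2 * t)) x := by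
  apply (hasDerivAt_neg_sq_sub_div t x).congr_of_eventuallyEq
  filter_upwards [Ioo_mem_nhds hx.1 hx.2] with x' hx'
  exact (isLUB_hopfLaxValues_riemannU0_fan ht hx'.1.le hx'.2.le).csSup_eq ⟨_, 0, rfl⟩

end RiemannDatum

theorem stmt14_general {lam ρ t : ℝ} (hρlam : ρ ≤ lam) (ht : 0 < t) :
    (∀ x, x ≤ (1 - 2 * lam) * t →
      IsLUB (hopfLaxValues legendreG (riemannU0 lam ρ) t x) (lam * x - t * lam * (1 - lam))) ∧
    (∀ x, (1 - 2 * lam) * t ≤ x → x ≤ (1 - 2 * ρ) * t →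
      IsLUB (hopfLaxValues legendreG (riemannU0 lam ρ) t x) (-(t - x) ^ 2 / (4 * t))) ∧
    (∀ x, (1 - 2 * ρ) * t ≤ x →
      IsLUB (hopfLaxValues legendreG (riemannU0 lam ρ) t x) (ρ * x - t * ρ * (1 - ρ))) ∧
    (∀ x ∈ Set.Ioo ((1 - 2 * lam) * t) ((1 - 2 * ρ) * t),
      deriv (fun x' => sSup (hopfLaxValues legendreG (riemannU0 lam ρ) t x')) x =
        (t - x) / (2 * t)) :=
  ⟨fun _ => isLUB_hopfLaxValues_riemannU0_left hρlam ht,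
    fun _ => isLUB_hopfLaxValues_riemannU0_fan ht,
    fun _ => isLUB_hopfLaxValues_riemannU0_right hρlam ht,
    fun _ hx => (hasDerivAt_sSup_hopfLaxValues_riemannU0_fan ht hx).deriv⟩

theorem stmt14 (lam ρ : ℝ) (hρ : 0 ≤ ρ) (hρlam : ρ < lam) (hlam : lam ≤ 1)
    (t : ℝ) (ht : 0 < t) :
    (∀ x : ℝ, x ≤ (1 - 2 * lam) * t →
      IsLUB {z : ℝ | ∃ y : ℝ, z = riemannU0 lam ρ y - t * legendreG ((x - y) / t)}
        (lam * x - t * lam * (1 - lam))) ∧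
    (∀ x : ℝ, (1 - 2 * lam) * t ≤ x → x ≤ (1 - 2 * ρ) * t →
      IsLUB {z : ℝ | ∃ y : ℝ, z = riemannU0 lam ρ y - t * legendreG ((x - y) / t)}
        (-(t - x) ^ 2 / (4 * t))) ∧
    (∀ x : ℝ, (1 - 2 * ρ) * t ≤ x →
      IsLUB {z : ℝ | ∃ y : ℝ, z = riemannU0 lam ρ y - t * legendreG ((x - y) / t)}
        (ρ * x - t * ρ * (1 - ρ))) ∧
    (∀ x ∈ Set.Ioo ((1 - 2 * lam) * t) ((1 - 2 * ρ) * t),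
      deriv (fun x' : ℝ =>
        sSup {z : ℝ | ∃ y : ℝ, z = riemannU0 lam ρ y - t * legendreG ((x' - y) / t)}) x =
        (t - x) / (2 * t)) :=
  stmt14_general hρlam.le ht
end

section
/- Let 0 ≤ ρ < λ ≤ 1, let 0 < δ < 1/10 with δ < λ − ρ, and let m be a positive integer with 1/m < δ/10. Let x ∈ (1−2λ+δ, 1−2ρ−δ) and s ∈ [1 + 1/(2m), 1 + 1/m]. Then the supremum U_s(xs) = sup_{v ∈ ℝ} { U₁(v) − (s−1)·g((xs−v)/(s−1)) } is attained at v = x, so that U_s(xs) = U₁(x) − (s−1)·g(x); moreover, for every v with |v − sx| < 2(s−1), one has U₁(v) − (s−1)·g((xs−v)/(s−1)) ≤ U_s(xs) − (v−x)². -/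
open Real

/-- The time-1 Hopf–Lax solution `U₁` for the decreasing Riemann datum with
densities `λ` (left) and `ρ` (right). -/
noncomputable def hopfLaxU1 (lam ρ y : ℝ) : ℝ :=
  if y ≤ 1 - 2 * lam then lam * y - lam * (1 - lam)
  else if y ≤ 1 - 2 * ρ then -(1 - y) ^ 2 / 4
  else ρ * y - ρ * (1 - ρ)

/-!
`U₁` is the lower envelope of the lines `y ↦ p y - p (1 - p)` with `ρ ≤ p ≤ λ`, and at a point `x`
of the rarefaction fan the line `p = (1 - x) / 2` touches it. The penalty
`v ↦ (s - 1) g ((x s - v) / (s - 1))` is a quadratic whose slope at `v = x` is the same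
`(1 - x) / 2`, because `x s` lies on the characteristic through `x`. The first-order terms therefore
cancel, and the functional falls short of its value at `x` by at least the quadratic remainder
`(v - x)² / (4 (s - 1))` of the penalty; this dominates `(v - x)²` as soon as `s ≤ 5 / 4`.
-/

lemma mul_legendreG_div {s : ℝ} (hs : s ≠ 1) (x v : ℝ) :
    (s - 1) * legendreG ((x * s - v) / (s - 1)) =
      (s - 1) * legendreG x + (1 - x) / 2 * (v - x) + (v - x) ^ 2 / (4 * (s - 1)) := by
  have hs' : s - 1 ≠ 0 := sub_ne_zero.mpr hs
  unfold legendreG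
  field_simp
  ring

section Supergradient

variable {U : ℝ → ℝ} {x s : ℝ}

lemma sub_mul_legendreG_le_of_le_tangent (hU : ∀ v, U v ≤ U x + (1 - x) / 2 * (v - x))
    (hs : s ≠ 1) (v : ℝ) :
    U v - (s - 1) * legendreG ((x * s - v) / (s - 1)) ≤
      U x - (s - 1) * legendreG x - (v - x) ^ 2 / (4 * (s - 1)) := by
  rw [mul_legendreG_div hs]
  linarith [hU v]

lemma isGreatest_sub_mul_legendreG_of_le_tangent
    (hU : ∀ v, U v ≤ U x + (1 - x) / 2 * (v - x)) (hs : 1 < s) :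
    IsGreatest {z : ℝ | ∃ v : ℝ, z = U v - (s - 1) * legendreG ((x * s - v) / (s - 1))}
      (U x - (s - 1) * legendreG x) := by
  have hs₀ : 0 < s - 1 := sub_pos.mpr hs
  refine ⟨⟨x, ?_⟩, ?_⟩
  · rw [show x * s - x = x * (s - 1) by ring, mul_div_cancel_right₀ x hs₀.ne']
  · rintro _ ⟨v, rfl⟩
    have hgap : 0 ≤ (v - x) ^ 2 / (4 * (s - 1)) := by positivity
    exact (sub_mul_legendreG_le_of_le_tangent hU hs.ne' v).trans (sub_le_self _ hgap)

end Supergradient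

section HopfLax

variable {lam ρ x : ℝ}

lemma hopfLaxU1_le_line {p : ℝ} (hp : p ∈ Set.Icc ρ lam) (y : ℝ) :
    hopfLaxU1 lam ρ y ≤ p * y - p * (1 - p) := by
  obtain ⟨hρp, hplam⟩ := hp
  unfold hopfLaxU1
  -- The lines of slopes `p` and `q` differ by `(p - q) * (y - (1 - p - q))`.
  split_ifs with hleft hfan
  · have hgap : 0 ≤ (lam - p) * (1 - p - lam - y) := mul_nonneg (by linarith) (by linarith)
    linarith
  · have hgap : 0 ≤ ((1 - y) / 2 - p) ^ 2 := sq_nonneg _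
    linarith
  · have hgap : 0 ≤ (p - ρ) * (y - (1 - p - ρ)) := mul_nonneg (by linarith) (by linarith)
    linarith

lemma hopfLaxU1_of_mem_Icc (hx : x ∈ Set.Icc (1 - 2 * lam) (1 - 2 * ρ)) :
    hopfLaxU1 lam ρ x = -(1 - x) ^ 2 / 4 := by
  unfold hopfLaxU1
  split_ifs with hleft hfan
  · obtain rfl : x = 1 - 2 * lam := le_antisymm hleft hx.1
    ring
  · rfl
  · exact absurd hx.2 hfan

lemma hopfLaxU1_le_tangent (hx : x ∈ Set.Icc (1 - 2 * lam) (1 - 2 * ρ)) (v : ℝ) :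
    hopfLaxU1 lam ρ v ≤ hopfLaxU1 lam ρ x + (1 - x) / 2 * (v - x) := by
  obtain ⟨hlamx, hxρ⟩ := hx
  calc hopfLaxU1 lam ρ v
      ≤ (1 - x) / 2 * v - (1 - x) / 2 * (1 - (1 - x) / 2) :=
        hopfLaxU1_le_line ⟨by linarith, by linarith⟩ v
    _ = hopfLaxU1 lam ρ x + (1 - x) / 2 * (v - x) := by
        rw [hopfLaxU1_of_mem_Icc ⟨hlamx, hxρ⟩]
        ring

theorem stmt15_general {s : ℝ} (hx : x ∈ Set.Icc (1 - 2 * lam) (1 - 2 * ρ)) (hs : 1 < s) :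
    IsGreatest
      {z : ℝ | ∃ v : ℝ, z = hopfLaxU1 lam ρ v - (s - 1) * legendreG ((x * s - v) / (s - 1))}
      (hopfLaxU1 lam ρ x - (s - 1) * legendreG x) ∧
    ∀ v : ℝ, hopfLaxU1 lam ρ v - (s - 1) * legendreG ((x * s - v) / (s - 1)) ≤
      (hopfLaxU1 lam ρ x - (s - 1) * legendreG x) - (v - x) ^ 2 / (4 * (s - 1)) :=
  ⟨isGreatest_sub_mul_legendreG_of_le_tangent (hopfLaxU1_le_tangent hx) hs,
    sub_mul_legendreG_le_of_le_tangent (hopfLaxU1_le_tangent hx) hs.ne'⟩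

end HopfLax

theorem stmt15 (lam ρ : ℝ) (hρ : 0 ≤ ρ) (hρlam : ρ < lam) (hlam : lam ≤ 1)
    (δ : ℝ) (hδ0 : 0 < δ) (hδ1 : δ < 1 / 10) (hδ2 : δ < lam - ρ)
    (m : ℕ) (hm : 0 < m) (hmδ : 1 / (m : ℝ) < δ / 10)
    (x : ℝ) (hx : x ∈ Set.Ioo (1 - 2 * lam + δ) (1 - 2 * ρ - δ))
    (s : ℝ) (hs : s ∈ Set.Icc (1 + 1 / (2 * (m : ℝ))) (1 + 1 / (m : ℝ))) :
    IsGreatest {z : ℝ | ∃ v : ℝ, z = hopfLaxU1 lam ρ v - (s - 1) * legendreG ((x * s - v) / (s - 1))}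
      (hopfLaxU1 lam ρ x - (s - 1) * legendreG x) ∧
    ∀ v : ℝ, |v - s * x| < 2 * (s - 1) →
      hopfLaxU1 lam ρ v - (s - 1) * legendreG ((x * s - v) / (s - 1)) ≤
        (hopfLaxU1 lam ρ x - (s - 1) * legendreG x) - (v - x) ^ 2 := by
  have hm₀ : 0 < 1 / (2 * (m : ℝ)) := by positivity
  have hs₁ : 1 < s := by linarith [hs.1]
  have hs₂ : 4 * (s - 1) ≤ 1 := by linarith [hs.2]
  obtain ⟨hmax, hgap⟩ := stmt15_general (lam := lam) (ρ := ρ) (x := x)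
    ⟨by linarith [hx.1], by linarith [hx.2]⟩ hs₁
  exact ⟨hmax, fun v _ => (hgap v).trans <| sub_le_sub_left
    (le_div_self (sq_nonneg (v - x)) (by linarith) hs₂) _⟩
end
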